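/- Let (F^1,…,F^N), with each F^α independent of t^{N+1}, be a vector potential of a flat F-manifold on a simply connected open M ⊆ ℂ^N, and let (F^1,…,F^{N+1}) be a vector potential of a flat F-manifold on M×U (U ⊆ ℂ simply connected open) extending it. Suppose the flat F-manifold M×U is conformal with Euler vector field E = Σ_{α=1}^{N+1}((1−q^α)t^α + r^α)∂/∂t^α, and fix a calibration of M given by matrices Ω^d_0 and R_n (satisfying the conformal homogeneity condition with Q = diag(q^1,…,q^N)). Then there exists a calibration of M×U, given by (N+1)×(N+1)-matrix-valued functions Ω̃^d_0 and matrices R̃_n satisfying the conformal homogeneity condition with Q̃ = diag(q^1,…,q^{N+1}), such that the upper-left N×N blocks satisfy π_N(Ω̃^d_0) = Ω^d_0 and π_N(R̃_n) = R_n, and moreover Ω̃^{α,d}_{N+1,0} = 0 for 1 ≤ α ≤ N and (R̃_n)^α_{N+1} = 0 for all 1 ≤ α ≤ N+1. -/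

import Mathlib

/-!
Since `F^1, …, F^N` do not depend on `t^{N+1}`, the matrices `Ω^d_0` pulled back to `M × U` and
completed by a zero last column still satisfy the calibration equations and the homogeneity
condition in their `N` rows; here `c^α_{βγ}` with `α ≤ N` vanishes as soon as one lower index is
`N + 1`. So only the last row `Y^d_β` of `Ω̃^d_0` and the last row `ρ_n` of `R̃_n` have to be found.

They are constructed by induction on the degree (`row_step`, `exists_row`). The system
`∂_γ Y^{d}_β = ∑ c^μ_{γβ} Y^{d-1}_μ` is closed, by the symmetry of the derivatives of `c` and the
associativity equations. It therefore has an analytic solution on the simply connected set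
`M × U` (`exists_primitive_pd`). Euler homogeneity of `c`, that is
`E c^μ_{γβ} = (q^γ + q^β - q^μ) c^μ_{γβ}` (`Eu_structure`), shows that the defect of homogeneity
of `Y^d_β`, corrected by the terms with `ρ_1, …, ρ_d`, is a constant. If the weight
`d + 1 + q^β - q^{N+1}` is nonzero, the constant is removed by adding a constant to `Y^d_β`; if the
weight vanishes, the constant becomes, up to sign, the entry of `R̃_{d+1}` in position
`(N + 1, β)`, and this is precisely the case in which `[Q̃, R̃_{d+1}] = (d + 1) R̃_{d+1}` allows a
nonzero entry there. For `β = N + 1` the weight is `d + 1 ≥ 1`, so `ρ_n` has last entry `0`.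

Two general facts are proved first. A closed holomorphic one-form on a simply connected open set
has a primitive (`exists_primitive`): primitives on balls have locally constant differences, so
they define a covering space with discrete fibre `ℂ`, and a section of this covering glues them.
A primitive of an analytic form is analytic (`analyticAt_of_hasFDerivAt`).
-/

/-!
STATEMENT 3: Given a flat F-manifold `M` with vector potential `(F^1,…,F^N)` and a
conformal extension `M×U` with vector potential `(F^1,…,F^{N+1})`, and a calibration
`(Ω^d_0, R_n)` of `M` satisfying the conformal homogeneity condition, there exists a
calibration `(Ω̃^d_0, R̃_n)` of `M×U` satisfying the conformal homogeneity condition with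
`Q̃ = diag(q^1,…,q^{N+1})`, with `π_N(Ω̃^d_0) = Ω^d_0`, `π_N(R̃_n) = R_n`,
`Ω̃^{α,d}_{N+1,0} = 0` for `α ≤ N` and `(R̃_n)^α_{N+1} = 0`.
-/

noncomputable section

abbrev Pt (n : ℕ) := Fin n → ℂ
abbrev Fn (n : ℕ) := (Fin n → ℂ) → ℂ

noncomputable def pd {n : ℕ} (i : Fin n) (f : Fn n) : Fn n :=
  fun x => fderiv ℂ f x (Pi.single i 1)

def prj {N : ℕ} (x : Pt (N + 1)) : Pt N := fun i => x i.castSucc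

/-! ### Holomorphic one-forms on simply connected sets -/

/-- The complex numbers with the discrete topology: the fibre of the covering space whose points
are germs of primitives of a closed form. -/
def DiscC : Type := ℂ

instance : TopologicalSpace DiscC := ⊥
instance : DiscreteTopology DiscC := ⟨rfl⟩

/-- The identity map onto the fibre. -/
def DiscC.mk (z : ℂ) : DiscC := z

/-- The identity map from the fibre. -/
def DiscC.val (v : DiscC) : ℂ := v

open Topology in
/-- The covering space obtained from local functions `g i` on an open cover whose differences are
locally constant. In the chart `i` the germ `g i + v` has coordinate `v`, so passing from the
chart `i` to the chart `j` adds `g i - g j`. -/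
def gluCore {X : Type} [TopologicalSpace X] (ι : Type) (Bs : ι → Set X)
    (hBo : ∀ i, IsOpen (Bs i)) (idx : X → ι) (hidx : ∀ x, x ∈ Bs (idx x)) (g : ι → X → ℂ)
    (hg : ∀ i j, ∀ x ∈ Bs i ∩ Bs j, ∀ᶠ y in 𝓝 x, g i y - g j y = g i x - g j x) :
    FiberBundleCore ι X DiscC where
  baseSet := Bs
  isOpen_baseSet := hBo
  indexAt := idx
  mem_baseSet_at := hidx
  coordChange := fun i j x v => .mk (v.val + (g i x - g j x))
  coordChange_self := by
    intro i x _ v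
    simp only [sub_self, add_zero]; rfl
  continuousOn_coordChange := by
    rintro i j ⟨x, v⟩ ⟨hx, -⟩
    apply ContinuousAt.continuousWithinAt
    have h1 : ∀ᶠ p : X × DiscC in 𝓝 (x, v), g i p.1 - g j p.1 = g i x - g j x :=
      (continuousAt_fst (p := (x, v))).eventually (hg i j x hx)
    have h2 : ∀ᶠ p : X × DiscC in 𝓝 (x, v), p.2 = v :=
      (continuousAt_snd (p := (x, v))).eventually (p := fun z => z = v) (by rw [nhds_discrete]; exact rfl)
    refine (continuousAt_const (y := DiscC.mk (v.val + (g i x - g j x)))).congr ?_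
    filter_upwards [h1, h2] with p hp1 hp2
    rw [hp1, hp2]
  coordChange_comp := by
    intro i j k x _ v
    change v.val + (g i x - g j x) + (g j x - g k x) = v.val + (g i x - g k x)
    ring

open Topology in
/-- On a simply connected space, local functions with locally constant differences come from a
global function, up to locally constant corrections: the covering `gluCore` has a section. -/
theorem glue {X : Type} [TopologicalSpace X] [SimplyConnectedSpace X]
    [LocallyPathConnectedSpace X] (ι : Type) (Bs : ι → Set X)
    (hBo : ∀ i, IsOpen (Bs i)) (idx : X → ι) (hidx : ∀ x, x ∈ Bs (idx x)) (g : ι → X → ℂ)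
    (hg : ∀ i j, ∀ x ∈ Bs i ∩ Bs j, ∀ᶠ y in 𝓝 x, g i y - g j y = g i x - g j x) :
    ∃ f : X → ℂ, ∀ i, ∀ x ∈ Bs i, ∀ᶠ y in 𝓝 x, f y - g i y = f x - g i x := by
  let Z := gluCore ι Bs hBo idx hidx g hg
  have cov : IsCoveringMap (Bundle.TotalSpace.proj : Bundle.TotalSpace DiscC Z.Fiber → X) :=
    FiberBundle.isCoveringMap
  -- A section of the covering is a lift of the identity map.
  have x0 : X := Classical.arbitrary X
  obtain ⟨s, ⟨-, hs⟩, -⟩ := cov.existsUnique_continuousMap_lifts (ContinuousMap.id X) x0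
    ⟨x0, .mk 0⟩ rfl
  have hs' : ∀ x, (s x).proj = x := fun x => congrFun hs x
  let v : X → ℂ := fun x => DiscC.val (s x).2
  refine ⟨fun x => v x + g (idx x) x, fun i x hx => ?_⟩
  have key : ∀ y, DiscC.val (Z.localTriv i (s y)).2 = v y + g (idx y) y - g i y := by
    intro y
    change DiscC.val (s y).2 + (g (idx (s y).proj) (s y).proj - g i (s y).proj) = _
    rw [hs' y]; simp only [v]; ring
  have hc : ContinuousAt (fun y => (Z.localTriv i (s y)).2) x := by
    refine continuousAt_snd.comp (ContinuousAt.comp ?_ s.continuous.continuousAt)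
    refine (Z.localTriv i).continuousAt ?_
    rw [(Z.localTriv i).mem_source]
    change (s x).proj ∈ Bs i
    rwa [hs' x]
  have h3 : ∀ᶠ y in 𝓝 x, (Z.localTriv i (s y)).2 = (Z.localTriv i (s x)).2 :=
    hc.eventually (p := fun z => z = (Z.localTriv i (s x)).2)
      (by rw [nhds_discrete]; exact rfl)
  filter_upwards [h3] with y hy
  have := key y
  rw [hy] at this
  rw [key x] at this
  exact this.symm

open Topology in
/-- Poincaré lemma for holomorphic one-forms on a simply connected open set: the primitives on
balls given by the convex case are glued. -/
theorem exists_primitive {E : Type} [NormedAddCommGroup E] [NormedSpace ℂ E]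
    {s : Set E} (hs : IsOpen s) (hsc : SimplyConnectedSpace s) (ω : E → E →L[ℂ] ℂ)
    (hω : DifferentiableOn ℂ ω s)
    (hdω : ∀ a ∈ s, ∀ x y, fderiv ℂ ω a x y = fderiv ℂ ω a y x) :
    ∃ f : E → ℂ, ∀ a ∈ s, HasFDerivAt f (ω a) a := by
  let _ : NormedSpace ℝ E := NormedSpace.restrictScalars ℝ ℂ E
  have : IsScalarTower ℝ ℂ E := inferInstance
  have : LocallyPathConnectedSpace s := hs.locallyPathConnectedSpace
  have hball : ∀ x : s, ∃ ε > 0, Metric.ball (x : E) ε ⊆ s := fun x =>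
    Metric.isOpen_iff.1 hs x x.2
  choose ε hε hεs using hball
  have hprim : ∀ x : s, ∃ f : E → ℂ, ∀ a ∈ Metric.ball (x : E) (ε x), HasFDerivAt f (ω a) a := by
    intro x
    refine (convex_ball (x : E) (ε x)).exists_forall_hasFDerivAt_of_fderiv_symmetric
      Metric.isOpen_ball ((hω.mono (hεs x)).restrictScalars ℝ) fun a ha u w => ?_
    have hda : DifferentiableAt ℂ ω a := hω.differentiableAt (hs.mem_nhds (hεs x ha))
    rw [hda.fderiv_restrictScalars ℝ]
    exact hdω a (hεs x ha) u w
  choose g hg using hprim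
  obtain ⟨f, hf⟩ := glue s (fun i => {x : s | (x : E) ∈ Metric.ball (i : E) (ε i)})
    (fun i => Metric.isOpen_ball.preimage continuous_subtype_val) id
    (fun x => Metric.mem_ball_self (hε x)) (fun i x => g i x) (by
      rintro i j x ⟨hxi, hxj⟩
      obtain ⟨δ, hδ, hδs⟩ := Metric.isOpen_iff.1 (Metric.isOpen_ball.inter Metric.isOpen_ball) (x : E)
        (⟨hxi, hxj⟩ : (x : E) ∈ Metric.ball (i : E) (ε i) ∩ Metric.ball (j : E) (ε j))
      have hcst : ∀ y ∈ Metric.ball (x : E) δ, g i y - g j y = g i x - g j x := by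
        intro y hy
        have hd : ∀ a ∈ Metric.ball (x : E) δ, HasFDerivAt (fun y => g i y - g j y) (0 : E →L[ℂ] ℂ) a := by
          intro a ha
          have h := (hg i a (hδs ha).1).sub (hg j a (hδs ha).2)
          rw [sub_self] at h
          exact h
        exact Metric.isOpen_ball.is_const_of_fderiv_eq_zero
          (convex_ball (x : E) δ).isPreconnected
          (fun a ha => (hd a ha).differentiableAt.differentiableWithinAt)
          (fun a ha => (hd a ha).fderiv) hy (Metric.mem_ball_self hδ)
      have : ∀ᶠ y : s in 𝓝 x, (y : E) ∈ Metric.ball (x : E) δ :=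
        continuous_subtype_val.continuousAt.eventually (Metric.ball_mem_nhds _ hδ)
      filter_upwards [this] with y hy using hcst y hy)
  classical
  refine ⟨fun x => if h : x ∈ s then f ⟨x, h⟩ else 0, fun a ha => ?_⟩
  have h1 := hf ⟨a, ha⟩ ⟨a, ha⟩ (Metric.mem_ball_self (hε _))
  have h2 : ∀ᶠ y in 𝓝 a, ∀ h : y ∈ s, f ⟨y, h⟩ - g ⟨a, ha⟩ y = f ⟨a, ha⟩ - g ⟨a, ha⟩ a := by
    rw [nhds_subtype_eq_comap, Filter.eventually_comap] at h1
    filter_upwards [h1] with y hy h using hy ⟨y, h⟩ rfl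
  refine ((hg ⟨a, ha⟩ a (Metric.mem_ball_self (hε _))).const_add
    (f ⟨a, ha⟩ - g ⟨a, ha⟩ a)).congr_of_eventuallyEq ?_
  filter_upwards [h2, hs.mem_nhds ha] with y hy hys
  rw [dif_pos hys, ← hy hys]; ring

/-! ### Products of simply connected spaces, and recursive choices -/

theorem simplyConnected_prod {X Y : Type} [TopologicalSpace X] [TopologicalSpace Y]
    [SimplyConnectedSpace X] [SimplyConnectedSpace Y] : SimplyConnectedSpace (X × Y) := by
  rw [simply_connected_iff_paths_homotopic]
  refine ⟨inferInstance, ?_⟩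
  rintro ⟨x, y⟩ ⟨x', y'⟩
  refine ⟨fun p p' => ?_⟩
  rw [← Path.Homotopic.prod_projLeft_projRight p, ← Path.Homotopic.prod_projLeft_projRight p']
  congr 1 <;> exact Subsingleton.elim _ _

/-- Dependent choice for conditions that only look at the past. -/
theorem exists_seq_of_step {α : Type} [Inhabited α] (P : ℕ → (ℕ → α) → Prop)
    (loc : ∀ n s s', (∀ m ≤ n, s m = s' m) → P n s → P n s')
    (step : ∀ n s, (∀ m < n, P m s) → ∃ a, P n (Function.update s n a)) :
    ∃ s, ∀ n, P n s := by
  classical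
  choose nxt hnxt using step
  let T : (n : ℕ) → {s : ℕ → α // ∀ m < n, P m s} := fun n => Nat.rec
    ⟨fun _ => default, fun m hm => absurd hm (Nat.not_lt_zero m)⟩
    (fun n s => ⟨Function.update s.1 n (nxt n s.1 s.2), fun m hm => by
      rcases Nat.lt_succ_iff_lt_or_eq.1 hm with h | h
      · refine loc m s.1 _ (fun k hk => ?_) (s.2 m h)
        rw [Function.update_of_ne (by omega)]
      · subst h; exact hnxt m s.1 s.2⟩) n
  have hT : ∀ n k, k ≠ n → (T (n + 1)).1 k = (T n).1 k := fun n k h =>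
    Function.update_of_ne h _ _
  have hst : ∀ m n, m + 1 ≤ n → (T n).1 m = (T (m + 1)).1 m := by
    intro m n h
    induction n, h using Nat.le_induction with
    | base => rfl
    | succ n hn ih => rw [hT n m (by omega), ih]
  refine ⟨fun n => (T (n + 1)).1 n, fun n => ?_⟩
  exact loc n (T (n + 1)).1 _ (fun m hm => hst m (n + 1) (by omega)) ((T (n + 1)).2 n (by omega))

/-! ### Analyticity of primitives -/

open Topology in
/-- A primitive of an analytic one-form is analytic: integrating the power series of the form
along rays divides the homogeneous part of degree `n` by `n`. -/
theorem analyticAt_of_hasFDerivAt {E : Type} [NormedAddCommGroup E] [NormedSpace ℂ E]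
    {f : E → ℂ} {ω : E → E →L[ℂ] ℂ} {a : E} (hω : AnalyticAt ℂ ω a)
    (hf : ∀ᶠ x in 𝓝 a, HasFDerivAt f (ω x) x) : AnalyticAt ℂ f a := by
  obtain ⟨p, r, hp⟩ := hω
  obtain ⟨ε, hε, hεf⟩ := Metric.eventually_nhds_iff.1 hf
  have hR : 0 < min r (ENNReal.ofReal ε) := lt_min hp.r_pos (by simpa using hε)
  replace hp := hp.mono hR (min_le_left _ _)
  set R := min r (ENNReal.ofReal ε) with hRdef
  -- `p.unshift 0` has the term of degree `n - 1` of `p` in degree `n`; its degree `0` part is `0`,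
  -- so the junk value `0⁻¹ = 0` is harmless.
  let S : FormalMultilinearSeries ℂ E ℂ := fun n => ((n : ℂ)⁻¹) • (p.unshift 0) n
  have hS : HasFPowerSeriesOnBall (fun x => f x - f a) S a R := by
    refine ⟨?_, hR, ?_⟩
    · refine hp.r_le.trans ?_
      rw [← FormalMultilinearSeries.radius_unshift p 0]
      refine ENNReal.le_of_forall_nnreal_lt fun ρ hρ => ?_
      obtain ⟨C, hC, hb⟩ := (p.unshift 0).norm_mul_pow_le_of_lt_radius hρ
      refine S.le_radius_of_bound C fun n => (le_trans ?_ (hb n))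
      refine mul_le_mul_of_nonneg_right ?_ (by positivity)
      change ‖((n : ℂ)⁻¹) • (p.unshift 0) n‖ ≤ _
      rw [norm_smul]
      refine mul_le_of_le_one_left (norm_nonneg _) ?_
      rcases Nat.eq_zero_or_pos n with h | h
      · simp [h]
      · rw [norm_inv, Complex.norm_natCast]
        exact inv_le_one_of_one_le₀ (by exact_mod_cast h)
    · intro y hy
      have hyε : ‖y‖ < ε := by
        have : y ∈ Metric.eball (0 : E) (ENNReal.ofReal ε) :=
          Metric.eball_subset_eball (min_le_right _ _) hy
        rw [Metric.eball_ofReal] at this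
        simpa using this
      have hyp : y ∈ Metric.eball (0 : E) p.radius := Metric.eball_subset_eball hp.r_le hy
      let A : ℕ → ℂ := fun n => p n (fun _ => y) y
      have hA : Summable fun n => ‖A n‖ := by
        refine Summable.of_nonneg_of_le (fun _ => norm_nonneg _)
          (fun n => (p n fun _ => y).le_opNorm y) ((p.summable_norm_apply hyp).mul_right _)
      let G : ℕ → C(ℝ, ℂ) := fun n => ⟨fun t => (t : ℂ) ^ n * A n, by fun_prop⟩
      have hmem : ∀ t ∈ Set.uIcc (0 : ℝ) 1, ‖t‖ ≤ 1 := by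
        intro t ht
        rw [Set.uIcc_of_le zero_le_one] at ht
        rw [Real.norm_eq_abs, abs_le]; constructor <;> linarith [ht.1, ht.2]
      have hsum := intervalIntegral.hasSum_intervalIntegral_of_summable_norm (a := 0) (b := 1)
        (f := G) (by
          refine Summable.of_nonneg_of_le (fun _ => norm_nonneg _) (fun n => ?_) hA
          refine (ContinuousMap.norm_le _ (norm_nonneg _)).2 fun t => ?_
          change ‖((t : ℝ) : ℂ) ^ n * A n‖ ≤ _
          rw [norm_mul, norm_pow, Complex.norm_real]
          exact mul_le_of_le_one_left (norm_nonneg _)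
            (pow_le_one₀ (norm_nonneg _) (hmem t t.2)))
      have hty : ∀ t ∈ Set.uIcc (0 : ℝ) 1, ((t : ℂ) • y) ∈ Metric.eball (0 : E) R := by
        intro t ht
        rw [Metric.mem_eball, edist_zero_right] at hy ⊢
        refine lt_of_le_of_lt ?_ hy
        rw [enorm_smul]
        refine mul_le_of_le_one_left (zero_le) ?_
        rw [← ofReal_norm, Complex.norm_real]
        simpa using hmem t ht
      have hser : ∀ t ∈ Set.uIcc (0 : ℝ) 1, ∑' n, G n t = ω (a + (t : ℂ) • y) y := by
        intro t ht
        have h1 := (ContinuousLinearMap.apply ℂ ℂ y).hasSum (hp.hasSum (hty t ht))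
        refine HasSum.tsum_eq ?_
        convert! h1 using 2 with n
        have := (p n).map_smul_univ (fun _ => (t : ℂ)) (fun _ => y)
        simp only [Finset.prod_const, Finset.card_univ, Fintype.card_fin] at this
        change (t : ℂ) ^ n * A n = (p n fun _ => (t : ℂ) • y) y
        rw [this]; rfl
      have hder : ∀ t ∈ Set.uIcc (0 : ℝ) 1,
          HasDerivAt (fun t : ℝ => f (a + (t : ℂ) • y)) (∑' n, G n t) t := by
        intro t ht
        rw [hser t ht]
        have h0 : HasFDerivAt f (ω (a + (t : ℂ) • y)) (a + (t : ℂ) • y) := by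
          refine hεf ?_
          rw [dist_eq_norm, add_sub_cancel_left, norm_smul, Complex.norm_real]
          exact (mul_le_of_le_one_left (norm_nonneg _) (hmem t ht)).trans_lt hyε
        have h1 : HasDerivAt (fun z : ℂ => a + z • y) y (t : ℂ) := by
          simpa using ((hasDerivAt_id (t : ℂ)).smul_const y).const_add a
        exact (h0.comp_hasDerivAt (t : ℂ) h1).comp_ofReal
      have hcont : IntervalIntegrable (fun t : ℝ => ∑' n, G n t) MeasureTheory.volume 0 1 := by
        refine ContinuousOn.intervalIntegrable ?_
        refine continuousOn_tsum (fun n => (G n).continuous.continuousOn) hA fun n t ht => ?_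
        change ‖((t : ℝ) : ℂ) ^ n * A n‖ ≤ _
        rw [norm_mul, norm_pow, Complex.norm_real]
        exact mul_le_of_le_one_left (norm_nonneg _) (pow_le_one₀ (norm_nonneg _) (hmem t ht))
      rw [intervalIntegral.integral_eq_sub_of_hasDerivAt hder hcont] at hsum
      simp only [Complex.ofReal_one, one_smul, Complex.ofReal_zero, zero_smul, add_zero] at hsum
      have hg : (fun n => S (n + 1) (fun _ => y)) = fun n => ∫ t in (0 : ℝ)..1, G n t := by
        funext n
        change (((n + 1 : ℕ) : ℂ)⁻¹) • (p.unshift 0 (n + 1)) (fun _ => y)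
          = ∫ t in (0 : ℝ)..1, (t : ℂ) ^ n * A n
        rw [intervalIntegral.integral_mul_const]
        have : ∫ t in (0 : ℝ)..1, (t : ℂ) ^ n = ((n + 1 : ℕ) : ℂ)⁻¹ := by
          have h := integral_pow (a := 0) (b := 1) n
          have h2 : ∫ t in (0 : ℝ)..1, (t : ℂ) ^ n = ((∫ t in (0 : ℝ)..1, t ^ n : ℝ) : ℂ) := by
            rw [← intervalIntegral.integral_ofReal]; simp
          rw [h2, h]; simp
        rw [this]; rfl
      rw [← hg] at hsum
      have h0 := HasSum.zero_add (f := fun n => S n (fun _ => y)) hsum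
      have hS0 : S 0 = 0 := by simp [S]
      simpa [hS0] using h0
  have h2 : AnalyticAt ℂ (fun x => (f x - f a) + f a) a :=
    AnalyticAt.add ⟨S, R, hS⟩ analyticAt_const
  simpa using h2

/-! ### Partial derivatives -/

section calculus
variable {m : ℕ} {S : Set (Pt m)}

/-- The derivative along the Euler field `∑ ((1 - q^θ) t^θ + r^θ) ∂/∂t^θ`. -/
def Eu (q r : Fin m → ℂ) (f : Fn m) : Fn m :=
  fun x => ∑ θ, ((1 - q θ) * x θ + r θ) * pd θ f x

theorem pd_of_hasFDerivAt {f : Fn m} {L : Pt m →L[ℂ] ℂ} {x : Pt m} (h : HasFDerivAt f L x)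
    (i : Fin m) : pd i f x = L (Pi.single i 1) := by
  rw [pd, h.fderiv]

theorem pd_congr (hS : IsOpen S) {f g : Fn m} (h : ∀ x ∈ S, f x = g x) {x : Pt m} (hx : x ∈ S)
    (i : Fin m) : pd i f x = pd i g x := by
  have : f =ᶠ[nhds x] g := Filter.eventuallyEq_of_mem (hS.mem_nhds hx) h
  rw [pd, pd, this.fderiv_eq]

theorem pd_an {f : Fn m} (hf : AnalyticOnNhd ℂ f S) (i : Fin m) : AnalyticOnNhd ℂ (pd i f) S :=
  (ContinuousLinearMap.apply ℂ ℂ (Pi.single i 1 : Pt m)).comp_analyticOnNhd hf.fderiv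

theorem an_diff {f : Fn m} (hf : AnalyticOnNhd ℂ f S) {x : Pt m} (hx : x ∈ S) :
    DifferentiableAt ℂ f x := (hf x hx).differentiableAt

theorem pd_const (i : Fin m) (a : ℂ) (x : Pt m) : pd i (fun _ => a) x = 0 := by
  simp [pd]

theorem pd_add {f g : Fn m} {x : Pt m} (hf : DifferentiableAt ℂ f x) (hg : DifferentiableAt ℂ g x)
    (i : Fin m) : pd i (fun y => f y + g y) x = pd i f x + pd i g x := by
  rw [pd_of_hasFDerivAt (hf.hasFDerivAt.fun_add hg.hasFDerivAt)]; rfl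

theorem pd_sub {f g : Fn m} {x : Pt m} (hf : DifferentiableAt ℂ f x) (hg : DifferentiableAt ℂ g x)
    (i : Fin m) : pd i (fun y => f y - g y) x = pd i f x - pd i g x := by
  rw [pd_of_hasFDerivAt (hf.hasFDerivAt.fun_sub hg.hasFDerivAt)]; rfl

theorem pd_mul {f g : Fn m} {x : Pt m} (hf : DifferentiableAt ℂ f x) (hg : DifferentiableAt ℂ g x)
    (i : Fin m) : pd i (fun y => f y * g y) x = f x * pd i g x + g x * pd i f x := by
  rw [pd_of_hasFDerivAt (hf.hasFDerivAt.fun_mul hg.hasFDerivAt)]; rfl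

theorem pd_const_mul {f : Fn m} {x : Pt m} (hf : DifferentiableAt ℂ f x) (a : ℂ)
    (i : Fin m) : pd i (fun y => a * f y) x = a * pd i f x := by
  rw [pd_mul (differentiableAt_const a) hf, pd_const, mul_zero, add_zero]

theorem pd_sum {ι : Type*} (s : Finset ι) {f : ι → Fn m} {x : Pt m}
    (hf : ∀ k ∈ s, DifferentiableAt ℂ (f k) x) (i : Fin m) :
    pd i (fun y => ∑ k ∈ s, f k y) x = ∑ k ∈ s, pd i (f k) x := by
  rw [pd_of_hasFDerivAt (HasFDerivAt.fun_sum fun k hk => (hf k hk).hasFDerivAt)]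
  simp [pd]

theorem pd_coord (i j : Fin m) (x : Pt m) : pd i (fun y => y j) x = if j = i then 1 else 0 := by
  rw [pd_of_hasFDerivAt (hasFDerivAt_apply j x)]
  simp [Pi.single_apply]

theorem pd_comm {f : Fn m} (hf : AnalyticOnNhd ℂ f S) {x : Pt m} (hx : x ∈ S) (i j : Fin m) :
    pd i (pd j f) x = pd j (pd i f) x := by
  have hd : DifferentiableAt ℂ (fderiv ℂ f) x := (hf.fderiv x hx).differentiableAt
  have key : ∀ i j : Fin m, pd i (pd j f) x
      = fderiv ℂ (fderiv ℂ f) x (Pi.single i 1) (Pi.single j 1) := by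
    intro i j
    rw [pd_of_hasFDerivAt (f := pd j f)
      ((ContinuousLinearMap.apply ℂ ℂ (Pi.single j 1 : Pt m)).hasFDerivAt.comp x hd.hasFDerivAt)]
    rfl
  rw [key, key]
  exact ((hf x hx).contDiffAt (n := ⊤)).isSymmSndFDerivAt_of_omega _ _

theorem an_Eu {f : Fn m} (hf : AnalyticOnNhd ℂ f S) (q r : Fin m → ℂ) :
    AnalyticOnNhd ℂ (Eu q r f) S := by
  refine Finset.univ.analyticOnNhd_fun_sum fun θ _ => ?_
  refine AnalyticOnNhd.mul ?_ (pd_an hf θ)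
  exact (analyticOnNhd_const.mul
    ((ContinuousLinearMap.proj (R := ℂ) (φ := fun _ : Fin m => ℂ) θ).analyticOnNhd S)).add
    analyticOnNhd_const

/-- The commutator of a coordinate vector field with the Euler field. -/
theorem pd_Eu {f : Fn m} (hf : AnalyticOnNhd ℂ f S) {x : Pt m} (hx : x ∈ S)
    (q r : Fin m → ℂ) (i : Fin m) :
    pd i (Eu q r f) x = (1 - q i) * pd i f x + Eu q r (pd i f) x := by
  have hd : ∀ θ : Fin m, DifferentiableAt ℂ (fun y : Pt m => (1 - q θ) * y θ + r θ) x := by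
    intro θ; fun_prop
  unfold Eu
  rw [pd_sum _ fun θ _ => (hd θ).fun_mul (an_diff (pd_an hf θ) hx)]
  have : ∀ θ : Fin m, pd i (fun y => ((1 - q θ) * y θ + r θ) * pd θ f y) x =
      ((1 - q θ) * x θ + r θ) * pd θ (pd i f) x + (if θ = i then (1 - q i) * pd i f x else 0) := by
    intro θ
    rw [pd_mul (hd θ) (an_diff (pd_an hf θ) hx), pd_comm hf hx i θ,
      pd_add (by fun_prop) (by fun_prop), pd_const_mul (by fun_prop), pd_const, pd_coord]
    split_ifs with h
    · subst h; ring
    · ring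
  simp only [this, Finset.sum_add_distrib, Finset.sum_ite_eq', Finset.mem_univ, if_true]
  ring

theorem Eu_congr (hS : IsOpen S) {f g : Fn m} (h : ∀ x ∈ S, f x = g x) {x : Pt m} (hx : x ∈ S)
    (q r : Fin m → ℂ) : Eu q r f x = Eu q r g x := by
  unfold Eu
  exact Finset.sum_congr rfl fun θ _ => by rw [pd_congr hS h hx]

theorem Eu_mul {f g : Fn m} {x : Pt m} (hf : DifferentiableAt ℂ f x) (hg : DifferentiableAt ℂ g x)
    (q r : Fin m → ℂ) :
    Eu q r (fun y => f y * g y) x = f x * Eu q r g x + g x * Eu q r f x := by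
  unfold Eu
  simp only [pd_mul hf hg, Finset.mul_sum, ← Finset.sum_add_distrib]
  exact Finset.sum_congr rfl fun θ _ => by ring

theorem Eu_sum {ι : Type*} (s : Finset ι) {f : ι → Fn m} {x : Pt m}
    (hf : ∀ k ∈ s, DifferentiableAt ℂ (f k) x) (q r : Fin m → ℂ) :
    Eu q r (fun y => ∑ k ∈ s, f k y) x = ∑ k ∈ s, Eu q r (f k) x := by
  unfold Eu
  simp only [pd_sum s hf, Finset.mul_sum]
  exact Finset.sum_comm

theorem Eu_add_const {f : Fn m} {x : Pt m} (hf : DifferentiableAt ℂ f x) (q r : Fin m → ℂ)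
    (a : ℂ) : Eu q r (fun y => f y + a) x = Eu q r f x := by
  unfold Eu
  simp only [pd_add hf (differentiableAt_const a), pd_const, add_zero]

theorem clm_apply_eq_sum (L : Pt m →L[ℂ] ℂ) (u : Pt m) :
    L u = ∑ i, u i * L (Pi.single i 1) := by
  conv_lhs => rw [pi_eq_sum_univ' u]
  simp [map_sum]

theorem const_of_pd_eq_zero (hS : IsOpen S) (hc : IsPreconnected S) {f : Fn m}
    (hf : AnalyticOnNhd ℂ f S) (h : ∀ x ∈ S, ∀ i, pd i f x = 0) :
    ∃ K, ∀ x ∈ S, f x = K := by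
  refine hS.exists_is_const_of_fderiv_eq_zero (𝕜 := ℂ) hc
    (fun x hx => (an_diff hf hx).differentiableWithinAt) fun x hx => ?_
  ext u
  rw [clm_apply_eq_sum]
  exact Finset.sum_eq_zero fun i _ => by
    have := h x hx i
    rw [pd] at this
    rw [this, mul_zero]

/-- Closed analytic one-forms on a simply connected open set are exact, in coordinates. -/
theorem exists_primitive_pd (hS : IsOpen S) (hsc : SimplyConnectedSpace S) (w : Fin m → Fn m)
    (hw : ∀ i, AnalyticOnNhd ℂ (w i) S)
    (hcl : ∀ x ∈ S, ∀ i j, pd j (w i) x = pd i (w j) x) :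
    ∃ f : Fn m, AnalyticOnNhd ℂ f S ∧ ∀ x ∈ S, ∀ i, pd i f x = w i x := by
  let L : Fin m → (Pt m →L[ℂ] ℂ) := fun i => ContinuousLinearMap.proj i
  let ω : Pt m → Pt m →L[ℂ] ℂ := fun x => ∑ i, w i x • L i
  have hω : AnalyticOnNhd ℂ ω S :=
    Finset.univ.analyticOnNhd_fun_sum fun i _ => (hw i).smul analyticOnNhd_const
  have hder : ∀ a ∈ S, ∀ u v, fderiv ℂ ω a u v
      = ∑ i, ∑ j, v i * u j * pd j (w i) a := by
    intro a ha u v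
    have h1 : HasFDerivAt ω (∑ i, (fderiv ℂ (w i) a).smulRight (L i)) a :=
      HasFDerivAt.fun_sum fun i _ => (an_diff (hw i) ha).hasFDerivAt.smul_const (L i)
    rw [h1.fderiv]
    simp only [sum_apply, ContinuousLinearMap.smulRight_apply, smul_apply]
    refine Finset.sum_congr rfl fun i _ => ?_
    rw [clm_apply_eq_sum, smul_eq_mul, Finset.sum_mul]
    refine Finset.sum_congr rfl fun j _ => ?_
    change u j * pd j (w i) a * v i = _
    ring
  obtain ⟨f, hf⟩ := exists_primitive hS hsc ω
    (fun x hx => (hω x hx).differentiableAt.differentiableWithinAt)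
    (by
      intro a ha u v
      rw [hder a ha, hder a ha, Finset.sum_comm]
      refine Finset.sum_congr rfl fun i _ => Finset.sum_congr rfl fun j _ => ?_
      rw [hcl a ha]; ring)
  refine ⟨f, fun a ha => analyticAt_of_hasFDerivAt (hω a ha)
    (Filter.mem_of_superset (hS.mem_nhds ha) hf), fun x hx i => ?_⟩
  rw [pd_of_hasFDerivAt (hf x hx)]
  simp [ω, L, Pi.single_apply]

end calculus

/-! ### The new row of the calibration -/

section row
variable {m : ℕ} {S : Set (Pt m)}

/-- One step of the recursion for the new row. The system `∂_γ Y_β = ∑ c^μ_{γβ} Yp_μ` is closed,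
so it has a solution, unique up to constants. The defect of homogeneity of any solution is
constant, and it can be absorbed into the solution unless its weight `n + 1 + q^β - q^l`
vanishes. -/
theorem row_step (hS : IsOpen S) (hsc : SimplyConnectedSpace S) (hpc : IsPreconnected S)
    (q r : Fin m → ℂ) (l : Fin m) (n : ℕ) (c : Fin m → Fin m → Fin m → Fn m)
    (hc : ∀ γ β μ, AnalyticOnNhd ℂ (c γ β μ) S)
    (hcd : ∀ x ∈ S, ∀ δ γ β μ, pd δ (c γ β μ) x = pd γ (c δ β μ) x)
    (hca : ∀ x ∈ S, ∀ γ δ β ν,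
      ∑ μ, c γ β μ x * c δ μ ν x = ∑ μ, c δ β μ x * c γ μ ν x)
    (hcE : ∀ x ∈ S, ∀ γ β μ, Eu q r (c γ β μ) x = (q γ + q β - q μ) * c γ β μ x)
    (Yp Z H H' : Fin m → Fn m) (hYp : ∀ β, AnalyticOnNhd ℂ (Yp β) S)
    (hYpd : ∀ x ∈ S, ∀ δ μ, pd δ (Yp μ) x = ∑ ν, c δ μ ν x * Z ν x)
    (hYpE : ∀ x ∈ S, ∀ β, Eu q r (Yp β) x = (n + q β - q l) * Yp β x + H β x)
    (hH' : ∀ β, AnalyticOnNhd ℂ (H' β) S)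
    (hH'd : ∀ x ∈ S, ∀ γ β, pd γ (H' β) x = ∑ μ, c γ β μ x * H μ x) :
    ∃ (Y : Fin m → Fn m) (K : Fin m → ℂ), (∀ β, AnalyticOnNhd ℂ (Y β) S) ∧
      (∀ x ∈ S, ∀ γ β, pd γ (Y β) x = ∑ μ, c γ β μ x * Yp μ x) ∧
      (∀ x ∈ S, ∀ β, Eu q r (Y β) x = (n + 1 + q β - q l) * Y β x + H' β x + K β) ∧
      ∀ β, (n + 1 + q β - q l) * K β = 0 := by
  have main : ∀ β, ∃ (f : Fn m) (K : ℂ), AnalyticOnNhd ℂ f S ∧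
      (∀ x ∈ S, ∀ γ, pd γ f x = ∑ μ, c γ β μ x * Yp μ x) ∧
      (∀ x ∈ S, Eu q r f x = (n + 1 + q β - q l) * f x + H' β x + K) ∧
      (n + 1 + q β - q l) * K = 0 := by
    intro β
    have hcY : ∀ x ∈ S, ∀ γ μ, DifferentiableAt ℂ (fun y => c γ β μ y * Yp μ y) x :=
      fun x hx γ μ => (an_diff (hc γ β μ) hx).fun_mul (an_diff (hYp μ) hx)
    have hw : ∀ γ, AnalyticOnNhd ℂ (fun x => ∑ μ, c γ β μ x * Yp μ x) S := fun γ =>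
      Finset.univ.analyticOnNhd_fun_sum fun μ _ => (hc γ β μ).mul (hYp μ)
    obtain ⟨f, hf, hfd⟩ := exists_primitive_pd hS hsc
      (fun γ x => ∑ μ, c γ β μ x * Yp μ x) hw (by
        intro x hx γ δ
        have key : ∀ γ δ, pd δ (fun x => ∑ μ, c γ β μ x * Yp μ x) x
            = ∑ ν, (∑ μ, c γ β μ x * c δ μ ν x) * Z ν x + ∑ μ, Yp μ x * pd δ (c γ β μ) x := by
          intro γ δ
          rw [pd_sum _ fun μ _ => hcY x hx γ μ]
          simp only [pd_mul (an_diff (hc _ _ _) hx) (an_diff (hYp _) hx),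
            Finset.sum_add_distrib, hYpd x hx, Finset.mul_sum, Finset.sum_mul]
          rw [Finset.sum_comm]
          simp only [mul_assoc]
        rw [key, key]
        congr 1
        · exact Finset.sum_congr rfl fun ν _ => by rw [hca x hx]
        · exact Finset.sum_congr rfl fun μ _ => by rw [hcd x hx])
    -- The defect of homogeneity of `f` is constant.
    obtain ⟨K, hK⟩ := const_of_pd_eq_zero hS hpc
      (f := fun x => Eu q r f x - ((n + 1 + q β - q l) * f x + H' β x))
      ((an_Eu hf q r).sub ((analyticOnNhd_const.mul hf).add (hH' β))) (by
        intro x hx γ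
        have h1 : DifferentiableAt ℂ (fun y => (n + 1 + q β - q l) * f y) x :=
          (an_diff hf hx).const_mul _
        rw [pd_sub (an_diff (an_Eu hf q r) hx) (h1.fun_add (an_diff (hH' β) hx)),
          pd_add h1 (an_diff (hH' β) hx), pd_const_mul (an_diff hf hx), pd_Eu hf hx,
          Eu_congr hS (fun y hy => hfd y hy γ) hx, hfd x hx, hH'd x hx,
          Eu_sum _ fun μ _ => hcY x hx γ μ]
        simp only [Eu_mul (an_diff (hc _ _ _) hx) (an_diff (hYp _) hx), hcE x hx, hYpE x hx]
        simp only [Finset.mul_sum, ← Finset.sum_add_distrib, ← Finset.sum_sub_distrib]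
        exact Finset.sum_eq_zero fun μ _ => by ring)
    by_cases h0 : (n + 1 + q β - q l : ℂ) = 0
    · refine ⟨f, K, hf, hfd, fun x hx => ?_, by rw [h0, zero_mul]⟩
      linear_combination hK x hx
    · refine ⟨fun y => f y + K / (n + 1 + q β - q l), 0, hf.add analyticOnNhd_const,
        fun x hx γ => ?_, fun x hx => ?_, mul_zero _⟩
      · rw [pd_add (an_diff hf hx) (differentiableAt_const _), pd_const, add_zero, hfd x hx]
      · rw [Eu_add_const (an_diff hf hx)]
        have h2 := hK x hx
        rw [mul_add, mul_div_cancel₀ K h0]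
        linear_combination h2
  choose Y K h1 h2 h3 h4 using main
  exact ⟨Y, K, h1, fun x hx γ β => h2 β x hx γ, fun x hx β => h3 β x hx, h4⟩

/-- The contribution of the monodromy constants `ρ 1, …, ρ n` to the homogeneity condition in
degree `k`. -/
def hist (G : ℕ → Fin m → Fin m → Fn m) (ρ : ℕ → Fin m → ℂ) (n k : ℕ) (β : Fin m) : Fn m :=
  fun x => ∑ i ∈ Finset.Icc 1 n, (-1 : ℂ) ^ (i - 1) * ∑ ν, ρ i ν * G (k - i) ν β x

theorem hist_congr (G : ℕ → Fin m → Fin m → Fn m) {ρ ρ' : ℕ → Fin m → ℂ} {n : ℕ}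
    (h : ∀ i ≤ n, ρ i = ρ' i) (k : ℕ) (β : Fin m) (x : Pt m) :
    hist G ρ n k β x = hist G ρ' n k β x :=
  Finset.sum_congr rfl fun i hi => by rw [h i (Finset.mem_Icc.1 hi).2]

theorem hist_an {G : ℕ → Fin m → Fin m → Fn m} (hG : ∀ k ν β, AnalyticOnNhd ℂ (G k ν β) S)
    (ρ : ℕ → Fin m → ℂ) (n k : ℕ) (β : Fin m) : AnalyticOnNhd ℂ (hist G ρ n k β) S :=
  Finset.analyticOnNhd_fun_sum _ fun _ _ => analyticOnNhd_const.mul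
    (Finset.analyticOnNhd_fun_sum _ fun _ _ => analyticOnNhd_const.mul (hG _ _ _))

/-- Since the remaining rows satisfy the calibration recursion, so does their contribution to the
homogeneity condition. -/
theorem hist_pd {G : ℕ → Fin m → Fin m → Fn m} (hG : ∀ k ν β, AnalyticOnNhd ℂ (G k ν β) S)
    {c : Fin m → Fin m → Fin m → Fn m}
    (hGd : ∀ x ∈ S, ∀ k γ ν β, pd γ (G (k + 1) ν β) x = ∑ μ, c γ β μ x * G k ν μ x)
    (ρ : ℕ → Fin m → ℂ) (n : ℕ) (x : Pt m) (hx : x ∈ S) (γ β : Fin m) :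
    pd γ (hist G ρ n (n + 1) β) x = ∑ μ, c γ β μ x * hist G ρ n n μ x := by
  have hd : ∀ i ν β, DifferentiableAt ℂ (fun y => ρ i ν * G (n + 1 - i) ν β y) x :=
    fun i ν β => (an_diff (hG _ _ _) hx).const_mul _
  have hd2 : ∀ i β, DifferentiableAt ℂ (fun y => ∑ ν, ρ i ν * G (n + 1 - i) ν β y) x :=
    fun i β => DifferentiableAt.fun_sum fun ν _ => hd i ν β
  have hi : ∀ i ∈ Finset.Icc 1 n,
      pd γ (fun y => (-1 : ℂ) ^ (i - 1) * ∑ ν, ρ i ν * G (n + 1 - i) ν β y) x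
        = ∑ μ, c γ β μ x * ((-1) ^ (i - 1) * ∑ ν, ρ i ν * G (n - i) ν μ x) := by
    intro i hi
    rw [pd_const_mul (hd2 i β), pd_sum _ fun ν _ => hd i ν β]
    simp only [pd_const_mul (an_diff (hG _ _ _) hx),
      Nat.succ_sub (Finset.mem_Icc.1 hi).2, Nat.succ_eq_add_one, hGd x hx, Finset.mul_sum]
    rw [Finset.sum_comm]
    exact Finset.sum_congr rfl fun μ _ => Finset.sum_congr rfl fun ν _ => by ring
  unfold hist
  rw [pd_sum _ fun i _ => (hd2 i β).const_mul _, Finset.sum_congr rfl hi, Finset.sum_comm]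
  simp only [Finset.mul_sum]

/-- The new row of the calibration, together with the new row of the matrices `R_n`. Here
`G k` stands for the remaining rows in degree `k`, with the row of index `l` replaced by zero. -/
theorem exists_row (hS : IsOpen S) (hsc : SimplyConnectedSpace S) (hpc : IsPreconnected S)
    (q r : Fin m → ℂ) (l : Fin m) (c : Fin m → Fin m → Fin m → Fn m)
    (hc : ∀ γ β μ, AnalyticOnNhd ℂ (c γ β μ) S)
    (hcd : ∀ x ∈ S, ∀ δ γ β μ, pd δ (c γ β μ) x = pd γ (c δ β μ) x)
    (hca : ∀ x ∈ S, ∀ γ δ β ν,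
      ∑ μ, c γ β μ x * c δ μ ν x = ∑ μ, c δ β μ x * c γ μ ν x)
    (hcE : ∀ x ∈ S, ∀ γ β μ, Eu q r (c γ β μ) x = (q γ + q β - q μ) * c γ β μ x)
    (G : ℕ → Fin m → Fin m → Fn m) (hG : ∀ k ν β, AnalyticOnNhd ℂ (G k ν β) S)
    (hGd : ∀ x ∈ S, ∀ k γ ν β, pd γ (G (k + 1) ν β) x = ∑ μ, c γ β μ x * G k ν μ x)
    (hG0 : ∀ x ∈ S, ∀ ν β, β ≠ l → G 0 ν β x = if ν = β then 1 else 0)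
    (hG0l : ∀ x ∈ S, ∀ ν, G 0 ν l x = 0) :
    ∃ (Y : ℕ → Fin m → Fn m) (ρ : ℕ → Fin m → ℂ),
      (∀ β x, Y 0 β x = if β = l then 1 else 0) ∧
      (∀ n β, AnalyticOnNhd ℂ (Y n β) S) ∧
      (∀ x ∈ S, ∀ n γ β, pd γ (Y (n + 1) β) x = ∑ μ, c γ β μ x * Y n μ x) ∧
      (∀ n β, (q l - q β) * ρ n β = n * ρ n β) ∧
      (∀ n, ρ n l = 0) ∧
      (∀ x ∈ S, ∀ n β, Eu q r (Y n β) x = (n + q β - q l) * Y n β x + hist G ρ n n β x) := by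
  obtain ⟨s, hs⟩ := exists_seq_of_step (α := (Fin m → Fn m) × (Fin m → ℂ))
    (fun n s =>
      (n = 0 → s 0 = (fun β _ => if β = l then 1 else 0, 0)) ∧
      (∀ β, AnalyticOnNhd ℂ ((s n).1 β) S) ∧
      (∀ k, n = k + 1 → ∀ x ∈ S, ∀ γ β, pd γ ((s n).1 β) x = ∑ μ, c γ β μ x * (s k).1 μ x) ∧
      (∀ β, (q l - q β) * (s n).2 β = n * (s n).2 β) ∧
      (s n).2 l = 0 ∧
      (∀ x ∈ S, ∀ β, Eu q r ((s n).1 β) x = (n + q β - q l) * (s n).1 β x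
        + hist G (fun i => (s i).2) n n β x))
    (by
      rintro n s s' h ⟨h1, h2, h3, h4, h5, h6⟩
      rw [h n le_rfl] at h2 h4 h5
      refine ⟨fun hn => by rw [← h 0 (Nat.zero_le n), h1 hn], h2, fun k hk x hx γ β => ?_,
        h4, h5, fun x hx β => ?_⟩
      · rw [← h n le_rfl, ← h k (by omega), h3 k hk x hx]
      · rw [← h n le_rfl, h6 x hx, hist_congr G (fun i hi => by rw [h i hi])])
    (by
      intro n s hP
      obtain _ | n := n
      · refine ⟨(fun β _ => if β = l then 1 else 0, 0), fun _ => by simp, fun β => ?_,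
          fun k hk => by omega, fun β => by simp, by simp, fun x hx β => ?_⟩
        · simpa using analyticOnNhd_const
        · simp only [Function.update_self, hist, Eu, pd_const]
          split_ifs with h
          · simp [h]
          · simp
      · obtain ⟨h1, h2, h3, h4, h5, h6⟩ := hP n (Nat.lt_succ_self n)
        have hZ : ∃ Z : Fin m → Fn m, ∀ x ∈ S, ∀ δ μ,
            pd δ ((s n).1 μ) x = ∑ ν, c δ μ ν x * Z ν x := by
          obtain _ | k := n
          · refine ⟨0, fun x hx δ μ => ?_⟩
            rw [h1 rfl]
            simp [pd_const]
          · exact ⟨(s k).1, h3 k rfl⟩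
        obtain ⟨Z, hZ⟩ := hZ
        obtain ⟨Y, K, g1, g2, g3, g4⟩ := row_step hS hsc hpc q r l n c hc hcd hca hcE (s n).1 Z
          (hist G (fun i => (s i).2) n n) (hist G (fun i => (s i).2) n (n + 1)) h2 hZ h6
          (hist_an hG _ _ _) (hist_pd hG hGd _ _)
        have hKl : K l = 0 := by
          have := g4 l
          rw [add_sub_cancel_right] at this
          exact (mul_eq_zero.1 this).resolve_left (Nat.cast_add_one_ne_zero n)
        -- The sign cancels the factor `(-1) ^ (i - 1)` of the summand `i = n + 1` of `hist`.
        refine ⟨(Y, fun β => (-1) ^ n * K β), fun h => by omega, fun β => ?_,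
          fun k hk x hx γ β => ?_, fun β => ?_, ?_, fun x hx β => ?_⟩
        · rw [Function.update_self]; exact g1 β
        · obtain rfl : n = k := by omega
          rw [Function.update_self, Function.update_of_ne (by omega)]
          exact g2 x hx γ β
        · rw [Function.update_self]
          push_cast
          linear_combination -(-1) ^ n * g4 β
        · rw [Function.update_self]
          simp [hKl]
        · have hh : hist G (fun i => (Function.update s (n + 1) (Y, fun β => (-1) ^ n * K β) i).2)
              (n + 1) (n + 1) β x = hist G (fun i => (s i).2) n (n + 1) β x + K β := by
            unfold hist
            rw [Finset.sum_Icc_succ_top (by omega)]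
            congr 1
            · refine Finset.sum_congr rfl fun i hi => ?_
              beta_reduce
              rw [Function.update_of_ne (by have := (Finset.mem_Icc.1 hi).2; omega)]
            · beta_reduce
              rw [Function.update_self, Nat.add_sub_cancel, Nat.sub_self]
              by_cases hβ : β = l
              · subst hβ
                simp [hG0l x hx, hKl]
              · simp only [hG0 x hx _ β hβ, mul_ite, mul_one, mul_zero, Finset.sum_ite_eq',
                  Finset.mem_univ, if_true]
                rw [← mul_assoc, ← mul_pow]
                simp
          rw [hh, Function.update_self]
          push_cast
          rw [g3 x hx β]
          ring)
  refine ⟨fun n => (s n).1, fun n => (s n).2, fun β x => ?_, fun n => (hs n).2.1,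
    fun x hx n => (hs (n + 1)).2.2.1 n rfl x hx, fun n => (hs n).2.2.2.1,
    fun n => (hs n).2.2.2.2.1, fun x hx n => (hs n).2.2.2.2.2 x hx⟩
  beta_reduce
  rw [(hs 0).1 rfl]

end row

/-! ### The product `M × U` -/

section product
variable {N : ℕ} {M : Set (Pt N)} {U : Set ℂ}

theorem prj_an (S : Set (Pt (N + 1))) : AnalyticOnNhd ℂ (prj (N := N)) S :=
  (ContinuousLinearMap.pi fun i : Fin N =>
    ContinuousLinearMap.proj (R := ℂ) (φ := fun _ : Fin (N + 1) => ℂ) i.castSucc).analyticOnNhd S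

theorem hasFDerivAt_prj (x : Pt (N + 1)) :
    HasFDerivAt (prj (N := N)) (ContinuousLinearMap.pi fun i : Fin N =>
      ContinuousLinearMap.proj (R := ℂ) (φ := fun _ : Fin (N + 1) => ℂ) i.castSucc) x :=
  (ContinuousLinearMap.pi fun i : Fin N =>
    ContinuousLinearMap.proj (R := ℂ) (φ := fun _ : Fin (N + 1) => ℂ) i.castSucc).hasFDerivAt

theorem prj_continuous : Continuous (prj (N := N)) :=
  continuous_pi fun i => continuous_apply i.castSucc

theorem pd_prj_castSucc {f : Fn N} {x : Pt (N + 1)} (hf : DifferentiableAt ℂ f (prj x))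
    (i : Fin N) : pd i.castSucc (fun y => f (prj y)) x = pd i f (prj x) := by
  rw [pd_of_hasFDerivAt (f := fun y => f (prj y))
    (hf.hasFDerivAt.comp x (hasFDerivAt_prj x)), pd]
  simp only [ContinuousLinearMap.comp_apply]
  congr 1
  ext j
  simp [Pi.single_apply]

theorem pd_prj_last {f : Fn N} {x : Pt (N + 1)} (hf : DifferentiableAt ℂ f (prj x)) :
    pd (Fin.last N) (fun y => f (prj y)) x = 0 := by
  rw [pd_of_hasFDerivAt (f := fun y => f (prj y))
    (hf.hasFDerivAt.comp x (hasFDerivAt_prj x))]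
  simp only [ContinuousLinearMap.comp_apply]
  convert map_zero (fderiv ℂ f (prj x))
  ext j
  simp [(Fin.castSucc_lt_last j).ne]

/-- Points of the product, as pairs. -/
def prodHomeo (M : Set (Pt N)) (U : Set ℂ) :
    {x : Pt (N + 1) | prj x ∈ M ∧ x (Fin.last N) ∈ U} ≃ₜ M × U where
  toFun x := (⟨prj x.1, x.2.1⟩, ⟨x.1 (Fin.last N), x.2.2⟩)
  invFun y := ⟨Fin.snoc (α := fun _ => ℂ) y.1.1 y.2.1, by
    have : prj (Fin.snoc (α := fun _ => ℂ) y.1.1 y.2.1 : Pt (N + 1)) = y.1.1 := by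
      ext i; simp [prj]
    exact ⟨by rw [this]; exact y.1.2, by simp⟩⟩
  left_inv x := by
    apply Subtype.ext
    ext i
    refine Fin.lastCases ?_ (fun j => ?_) i <;> simp [prj]
  right_inv y := by
    refine Prod.ext (Subtype.ext ?_) (Subtype.ext ?_)
    · ext i; simp [prj]
    · simp
  continuous_toFun := by
    refine Continuous.prodMk (Continuous.subtype_mk (prj_continuous.comp continuous_subtype_val) _)
      (Continuous.subtype_mk ((continuous_apply _).comp continuous_subtype_val) _)
  continuous_invFun := by
    refine Continuous.subtype_mk (continuous_pi fun i => ?_) _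
    refine Fin.lastCases ?_ (fun j => ?_) i
    · simp only [Fin.snoc_last]; fun_prop
    · simp only [Fin.snoc_castSucc]
      exact (continuous_apply j).comp (continuous_subtype_val.comp continuous_fst)

theorem product_open (hM : IsOpen M) (hU : IsOpen U) :
    IsOpen {x : Pt (N + 1) | prj x ∈ M ∧ x (Fin.last N) ∈ U} :=
  (hM.preimage prj_continuous).inter (hU.preimage (continuous_apply _))

theorem product_sc (hM : SimplyConnectedSpace M) (hU : SimplyConnectedSpace U) :
    SimplyConnectedSpace {x : Pt (N + 1) | prj x ∈ M ∧ x (Fin.last N) ∈ U} :=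
  haveI := simplyConnected_prod (X := M) (Y := U)
  (prodHomeo M U).toHomotopyEquiv.simplyConnectedSpace

/-- The homogeneity of the structure constants of a conformal flat F-manifold. -/
theorem Eu_structure {m : ℕ} {S : Set (Pt m)} (hS : IsOpen S) {f : Fn m}
    (hf : AnalyticOnNhd ℂ f S) (q r : Fin m → ℂ) (w : ℂ) (A : Fin m → ℂ) (B : ℂ)
    (hE : ∀ x ∈ S, Eu q r f x = w * f x + (∑ β, A β * x β) + B) (x : Pt m) (hx : x ∈ S)
    (γ β : Fin m) :
    Eu q r (pd γ (pd β f)) x = (w - 2 + q γ + q β) * pd γ (pd β f) x := by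
  have h1 : ∀ y ∈ S, Eu q r (pd β f) y = (w - 1 + q β) * pd β f y + A β := by
    intro y hy
    have h := pd_congr hS hE hy β
    have hsum : DifferentiableAt ℂ (fun y : Pt m => ∑ β, A β * y β) y := by fun_prop
    have hw := (an_diff hf hy).const_mul w
    rw [pd_Eu hf hy, pd_add (hw.fun_add hsum) (by fun_prop), pd_add hw hsum,
      pd_const_mul (an_diff hf hy), pd_const, pd_sum _ fun i _ => by fun_prop] at h
    have h2 : ∀ i, pd β (fun y : Pt m => A i * y i) y = if i = β then A i else 0 := by
      intro i
      rw [pd_const_mul (by fun_prop), pd_coord]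
      split_ifs <;> simp
    simp only [h2, Finset.sum_ite_eq', Finset.mem_univ, if_true] at h
    linear_combination h
  have h := pd_congr hS h1 hx γ
  have hb := an_diff (pd_an hf β) hx
  rw [pd_Eu (pd_an hf β) hx, pd_add (hb.const_mul _) (by fun_prop), pd_const_mul hb,
    pd_const] at h
  linear_combination h

/-- An `N × N` matrix bordered by a zero row and a zero column. -/
def bord (X : Matrix (Fin N) (Fin N) ℂ) (ν β : Fin (N + 1)) : ℂ :=
  Fin.lastCases (motive := fun _ => ℂ) 0
    (fun ν' => Fin.lastCases (motive := fun _ => ℂ) 0 (fun β' => X ν' β') β) ν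

@[simp] theorem bord_last (X : Matrix (Fin N) (Fin N) ℂ) (β : Fin (N + 1)) :
    bord X (Fin.last N) β = 0 := by simp [bord]

@[simp] theorem bord_castSucc_last (X : Matrix (Fin N) (Fin N) ℂ) (ν : Fin N) :
    bord X ν.castSucc (Fin.last N) = 0 := by simp [bord]

@[simp] theorem bord_castSucc (X : Matrix (Fin N) (Fin N) ℂ) (ν β : Fin N) :
    bord X ν.castSucc β.castSucc = X ν β := by simp [bord]

/-- An `N × N` matrix bordered by a zero column and the last row `v`. -/
def brow (X : Matrix (Fin N) (Fin N) ℂ) (v : Fin (N + 1) → ℂ) :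
    Matrix (Fin (N + 1)) (Fin (N + 1)) ℂ :=
  fun α β => Fin.lastCases (motive := fun _ => ℂ) (v β) (fun α' => bord X α'.castSucc β) α

@[simp] theorem brow_last (X : Matrix (Fin N) (Fin N) ℂ) (v : Fin (N + 1) → ℂ)
    (β : Fin (N + 1)) : brow X v (Fin.last N) β = v β := by simp [brow]

@[simp] theorem brow_castSucc (X : Matrix (Fin N) (Fin N) ℂ) (v : Fin (N + 1) → ℂ)
    (α : Fin N) (β : Fin (N + 1)) : brow X v α.castSucc β = bord X α.castSucc β := by simp [brow]

end product

/-! ### The extended calibration -/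

theorem stmt3 (N : ℕ) (hN : 0 < N)
    (M : Set (Pt N)) (hM : IsOpen M) (hMne : M.Nonempty) (hMsc : SimplyConnectedSpace ↥M)
    (U : Set ℂ) (hU : IsOpen U) (hUne : U.Nonempty) (hUsc : SimplyConnectedSpace ↥U)
    (MU : Set (Pt (N + 1))) (hMU : MU = {x | prj x ∈ M ∧ x (Fin.last N) ∈ U})
    -- the vector potential (F^1, …, F^{N+1}) on M × U
    (F : Fin (N + 1) → Fn (N + 1)) (hFan : ∀ α, AnalyticOnNhd ℂ (F α) MU)
    -- the first N components do not depend on t^{N+1}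
    (hFindep : ∀ (α : Fin N) (x y : Pt (N + 1)),
      (∀ i : Fin N, x i.castSucc = y i.castSucc) → F α.castSucc x = F α.castSucc y)
    (hVP1 : ∀ x ∈ MU, ∀ α β : Fin (N + 1),
      pd β (pd ⟨0, Nat.succ_pos N⟩ (F α)) x = if α = β then 1 else 0)
    (hVP2 : ∀ x ∈ MU, ∀ α β γ δ' : Fin (N + 1),
      ∑ μ, pd β (pd μ (F α)) x * pd γ (pd δ' (F μ)) x =
      ∑ μ, pd γ (pd μ (F α)) x * pd β (pd δ' (F μ)) x)
    -- conformality of M × U with Euler field E = Σ ((1-q^α)t^α + r^α) ∂/∂t^α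
    (q r : Fin (N + 1) → ℂ) (hq1 : q ⟨0, Nat.succ_pos N⟩ = 0)
    (A : Matrix (Fin (N + 1)) (Fin (N + 1)) ℂ) (B : Fin (N + 1) → ℂ)
    (hconf : ∀ x ∈ MU, ∀ α : Fin (N + 1),
      ∑ μ, ((1 - q μ) * x μ + r μ) * pd μ (F α) x =
        (2 - q α) * F α x + (∑ β, A α β * x β) + B α)
    -- the restriction (F^1, …, F^N) as a vector potential on M
    (FN : Fin N → Fn N) (hFN : ∀ (α : Fin N) (x : Pt (N + 1)), FN α (prj x) = F α.castSucc x)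
    -- the fixed calibration (Ω^d_0, R_n) of M, satisfying conformal homogeneity
    (Ω : ℤ → Pt N → Matrix (Fin N) (Fin N) ℂ) (R : ℕ → Matrix (Fin N) (Fin N) ℂ)
    (hΩan : ∀ (d : ℤ) (α β : Fin N), AnalyticOnNhd ℂ (fun x => Ω d x α β) M)
    (hΩ1 : ∀ x, Ω (-1) x = 1)
    (hΩder : ∀ (d : ℤ), 0 ≤ d → ∀ x ∈ M, ∀ α β γ : Fin N,
      pd γ (fun y => Ω d y α β) x = ∑ μ, pd γ (pd β (FN μ)) x * Ω (d - 1) x α μ)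
    (QN : Matrix (Fin N) (Fin N) ℂ) (hQN : QN = Matrix.diagonal fun i => q i.castSucc)
    (hR : ∀ n : ℕ, 1 ≤ n → QN * R n - R n * QN = (n : ℂ) • R n)
    (hΩhom : ∀ (d : ℤ), -1 ≤ d → ∀ x ∈ M, ∀ α β : Fin N,
      ∑ θ, ((1 - q θ.castSucc) * x θ + r θ.castSucc) * pd θ (fun y => Ω d y α β) x =
        ((d : ℂ) + 1) * Ω d x α β + (Ω d x * QN - QN * Ω d x) α β
          + ∑ i ∈ Finset.Icc 1 (d + 1).toNat,
              (-1 : ℂ) ^ (i - 1) * (R i * Ω (d - i) x) α β) :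
    -- conclusion: there is a calibration of M × U extending it
    ∃ (Ωt : ℤ → Pt (N + 1) → Matrix (Fin (N + 1)) (Fin (N + 1)) ℂ)
      (Rt : ℕ → Matrix (Fin (N + 1)) (Fin (N + 1)) ℂ),
      (∀ (d : ℤ) (α β : Fin (N + 1)), AnalyticOnNhd ℂ (fun x => Ωt d x α β) MU) ∧
      (∀ x, Ωt (-1) x = 1) ∧
      (∀ (d : ℤ), 0 ≤ d → ∀ x ∈ MU, ∀ α β γ : Fin (N + 1),
        pd γ (fun y => Ωt d y α β) x =
          ∑ μ, pd γ (pd β (F μ)) x * Ωt (d - 1) x α μ) ∧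
      (∀ n : ℕ, 1 ≤ n →
        Matrix.diagonal q * Rt n - Rt n * Matrix.diagonal q = (n : ℂ) • Rt n) ∧
      (∀ (d : ℤ), -1 ≤ d → ∀ x ∈ MU, ∀ α β : Fin (N + 1),
        ∑ θ, ((1 - q θ) * x θ + r θ) * pd θ (fun y => Ωt d y α β) x =
          ((d : ℂ) + 1) * Ωt d x α β
            + (Ωt d x * Matrix.diagonal q - Matrix.diagonal q * Ωt d x) α β
            + ∑ i ∈ Finset.Icc 1 (d + 1).toNat,
                (-1 : ℂ) ^ (i - 1) * (Rt i * Ωt (d - i) x) α β) ∧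
      -- π_N(Ω̃^d_0) = Ω^d_0 and π_N(R̃_n) = R_n
      (∀ (d : ℤ), ∀ x ∈ MU, ∀ α β : Fin N,
        Ωt d x α.castSucc β.castSucc = Ω d (prj x) α β) ∧
      (∀ (n : ℕ) (α β : Fin N), Rt n α.castSucc β.castSucc = R n α β) ∧
      -- Ω̃^{α,d}_{N+1,0} = 0 for α ≤ N, and (R̃_n)^α_{N+1} = 0 for all α
      (∀ (d : ℤ), ∀ x ∈ MU, ∀ α : Fin N, Ωt d x α.castSucc (Fin.last N) = 0) ∧
      (∀ (n : ℕ) (α : Fin (N + 1)), Rt n α (Fin.last N) = 0) := by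
  have hS : IsOpen MU := hMU ▸ product_open hM hU
  have hsc : SimplyConnectedSpace MU := hMU ▸ product_sc hMsc hUsc
  have hpc : IsPreconnected MU := isPreconnected_iff_preconnectedSpace.2 inferInstance
  have hprj : ∀ x ∈ MU, prj x ∈ M := fun x hx => by rw [hMU] at hx; exact hx.1
  obtain ⟨u, hu⟩ := hUne
  -- `FN` is analytic because it is `F` restricted to the slice `t^{N+1} = u`.
  have hFNan : ∀ μ, AnalyticOnNhd ℂ (FN μ) M := by
    intro μ y hy
    have hp : ∀ z : Pt N, prj (Fin.snoc (α := fun _ => ℂ) z u : Pt (N + 1)) = z := by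
      intro z; ext i; simp [prj]
    have he : FN μ = fun z => F μ.castSucc (Fin.snoc (α := fun _ => ℂ) z u : Pt (N + 1)) := by
      ext z; rw [← hFN, hp]
    have hmem : (Fin.snoc (α := fun _ => ℂ) y u : Pt (N + 1)) ∈ MU := by
      rw [hMU]; exact ⟨by rw [hp]; exact hy, by simpa using hu⟩
    rw [he]
    refine AnalyticAt.fun_comp (hFan μ.castSucc _ hmem) ?_
    refine AnalyticAt.pi fun i => ?_
    refine Fin.lastCases ?_ (fun j => ?_) i
    · simpa using analyticAt_const
    · simp only [Fin.snoc_castSucc]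
      exact (ContinuousLinearMap.proj (R := ℂ) (φ := fun _ : Fin N => ℂ) j).analyticAt y
  have hFe : ∀ μ : Fin N, F μ.castSucc = fun x => FN μ (prj x) := fun μ => funext fun x =>
    (hFN μ x).symm
  have hF1 : ∀ x ∈ MU, ∀ (μ β : Fin N),
      pd β.castSucc (F μ.castSucc) x = pd β (FN μ) (prj x) := fun x hx μ β => by
    rw [hFe, pd_prj_castSucc (an_diff (hFNan μ) (hprj x hx))]
  have hF1' : ∀ x ∈ MU, ∀ (μ : Fin N),
      pd (Fin.last N) (F μ.castSucc) x = 0 := fun x hx μ => by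
    rw [hFe, pd_prj_last (an_diff (hFNan μ) (hprj x hx))]
  have hF2 : ∀ x ∈ MU, ∀ (μ β γ : Fin N),
      pd γ.castSucc (pd β.castSucc (F μ.castSucc)) x = pd γ (pd β (FN μ)) (prj x) := by
    intro x hx μ β γ
    rw [pd_congr hS (fun y hy => hF1 y hy μ β) hx,
      pd_prj_castSucc (an_diff (pd_an (hFNan μ) β) (hprj x hx))]
  have hF2' : ∀ x ∈ MU, ∀ (μ : Fin N) (γ : Fin (N + 1)),
      pd γ (pd (Fin.last N) (F μ.castSucc)) x = 0 := by
    intro x hx μ γ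
    rw [pd_congr hS (fun y hy => hF1' y hy μ) hx, pd_const]
  have hF2'' : ∀ x ∈ MU, ∀ (μ : Fin N) (β : Fin (N + 1)),
      pd (Fin.last N) (pd β (F μ.castSucc)) x = 0 := by
    intro x hx μ β
    rw [pd_comm (hFan _) hx, hF2' x hx]
  have hBan : ∀ d ν β, AnalyticOnNhd ℂ (fun x => bord (Ω d (prj x)) ν β) MU := by
    intro d ν β
    refine Fin.lastCases ?_ (fun ν => ?_) ν
    · simpa using analyticOnNhd_const
    refine Fin.lastCases ?_ (fun β => ?_) β
    · simpa using analyticOnNhd_const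
    · simp only [bord_castSucc]
      exact fun x hx => AnalyticAt.fun_comp (hΩan d ν β _ (hprj x hx)) (prj_an MU x hx)
  have hBd : ∀ x ∈ MU, ∀ d : ℤ, 0 ≤ d → ∀ γ ν β, pd γ (fun x => bord (Ω d (prj x)) ν β) x
      = ∑ μ, pd γ (pd β (F μ)) x * bord (Ω (d - 1) (prj x)) ν μ := by
    intro x hx d hd γ ν β
    refine Fin.lastCases ?_ (fun ν => ?_) ν
    · simp [pd_const]
    rw [Fin.sum_univ_castSucc]
    simp only [bord_castSucc, bord_castSucc_last, mul_zero, add_zero]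
    refine Fin.lastCases ?_ (fun β => ?_) β
    · simp [pd_const, hF2' x hx]
    have hdiff := an_diff (hΩan d ν β) (hprj x hx)
    simp only [bord_castSucc]
    refine Fin.lastCases ?_ (fun γ => ?_) γ
    · rw [pd_prj_last (f := fun y => Ω d y ν β) hdiff]
      simp [hF2'' x hx]
    · rw [pd_prj_castSucc (f := fun y => Ω d y ν β) hdiff, hΩder d hd _ (hprj x hx)]
      simp only [hF2 x hx]
  -- The index is shifted by one: `k = d + 1`.
  obtain ⟨Y, ρ, hY0, hYan, hYd, hρ, hρl, hYE⟩ := exists_row hS hsc hpc q r (Fin.last N)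
    (fun γ β μ => pd γ (pd β (F μ))) (fun γ β μ => pd_an (pd_an (hFan μ) β) γ)
    (fun x hx δ γ β μ => pd_comm (pd_an (hFan μ) β) hx δ γ)
    (fun x hx γ δ β ν => by
      have := hVP2 x hx ν δ γ β
      simpa only [mul_comm] using this)
    (fun x hx γ β μ => by
      rw [Eu_structure hS (hFan μ) q r (2 - q μ) (A μ) (B μ) (fun y hy => hconf y hy μ) x hx]
      ring)
    (fun k ν β x => bord (Ω ((k : ℤ) - 1) (prj x)) ν β) (fun k ν β => hBan _ ν β)
    (fun x hx k γ ν β => by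
      have := hBd x hx k (by positivity) γ ν β
      simpa using this)
    (fun x hx ν β hβ => by
      simp only [Nat.cast_zero, zero_sub, hΩ1]
      revert hβ
      refine Fin.lastCases (fun h => absurd rfl h) (fun β _ => ?_) β
      refine Fin.lastCases ?_ (fun ν => ?_) ν
      · simp [(Fin.castSucc_lt_last β).ne']
      · simp [Matrix.one_apply])
    (fun x hx ν => by
      refine Fin.lastCases ?_ (fun ν => ?_) ν <;> simp)
  refine ⟨fun d x => brow (Ω d (prj x)) fun β => Y (d + 1).toNat β x,
    fun n => brow (R n) (ρ n), ?_, ?_, ?_, ?_, ?_, ?_, ?_, ?_, ?_⟩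
  · intro d α β
    refine Fin.lastCases ?_ (fun α => ?_) α
    · simpa using hYan _ β
    · simpa using hBan d _ β
  · intro x
    ext α β
    refine Fin.lastCases ?_ (fun α => ?_) α
    · simp [hY0, Matrix.one_apply, eq_comm]
    · refine Fin.lastCases ?_ (fun β => ?_) β
      · simp [(Fin.castSucc_lt_last α).ne]
      · simp [Matrix.one_apply, hΩ1]
  · intro d hd x hx α β γ
    refine Fin.lastCases ?_ (fun α => ?_) α
    · simp only [brow_last]
      obtain ⟨k, rfl⟩ := Int.eq_ofNat_of_zero_le hd
      have h1 : ((k : ℤ) + 1).toNat = k + 1 := by omega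
      have h2 : ((k : ℤ) - 1 + 1).toNat = k := by omega
      rw [h1, h2]
      exact hYd x hx k γ β
    · simp only [brow_castSucc]
      exact hBd x hx d hd γ _ β
  · intro n hn
    ext α β
    simp only [Matrix.sub_apply, Matrix.smul_apply, Matrix.diagonal_mul, Matrix.mul_diagonal,
      smul_eq_mul]
    refine Fin.lastCases ?_ (fun α => ?_) α
    · simp only [brow_last]
      linear_combination hρ n β
    · refine Fin.lastCases ?_ (fun β => ?_) β
      · simp
      · have := congrFun (congrFun (hR n hn) α) β
        simpa [hQN, Matrix.diagonal_mul, Matrix.mul_diagonal] using this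
  · intro d hd x hx α β
    simp only [Matrix.sub_apply, Matrix.diagonal_mul, Matrix.mul_diagonal]
    refine Fin.lastCases ?_ (fun α => ?_) α
    · obtain ⟨n, hn⟩ := Int.eq_ofNat_of_zero_le (by omega : 0 ≤ d + 1)
      obtain rfl : d = n - 1 := by omega
      have h1 : ((n : ℤ) - 1 + 1).toNat = n := by omega
      have h := hYE x hx n β
      simp only [brow_last, h1]
      rw [Eu] at h
      rw [h, hist]
      have h3 : ∀ i ∈ Finset.Icc 1 n, (-1 : ℂ) ^ (i - 1) * (brow (R i) (ρ i) *
          brow (Ω ((n : ℤ) - 1 - i) (prj x))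
            fun β => Y ((n : ℤ) - 1 - i + 1).toNat β x) (Fin.last N) β
          = (-1 : ℂ) ^ (i - 1) * ∑ ν, ρ i ν * bord (Ω (((n - i : ℕ) : ℤ) - 1) (prj x)) ν β := by
        intro i hi
        have h4 : (((n - i : ℕ) : ℤ) - 1) = (n : ℤ) - 1 - i := by
          have := (Finset.mem_Icc.1 hi).2; omega
        rw [h4, Matrix.mul_apply, Fin.sum_univ_castSucc, Fin.sum_univ_castSucc]
        simp [hρl]
      rw [Finset.sum_congr rfl h3]
      push_cast
      ring
    · have h3 : ∀ i, (brow (R i) (ρ i) * brow (Ω (d - i) (prj x))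
          fun β => Y (d - i + 1).toNat β x) α.castSucc β
          = ∑ ν, R i α ν * bord (Ω (d - i) (prj x)) ν.castSucc β := by
        intro i
        rw [Matrix.mul_apply, Fin.sum_univ_castSucc]
        simp
      simp only [h3, brow_castSucc]
      refine Fin.lastCases ?_ (fun β => ?_) β
      · simp [pd_const]
      · have hdiff := an_diff (hΩan d α β) (hprj x hx)
        have h := hΩhom d hd _ (hprj x hx) α β
        simp only [hQN, Matrix.sub_apply, Matrix.diagonal_mul, Matrix.mul_diagonal] at h
        simp only [Matrix.mul_apply] at h
        simp only [bord_castSucc]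
        rw [Fin.sum_univ_castSucc, pd_prj_last (f := fun y => Ω d y α β) hdiff]
        simp only [pd_prj_castSucc (f := fun y => Ω d y α β) hdiff]
        rw [mul_zero, add_zero]
        exact h
  · intro d x hx α β; simp
  · intro n α β; simp
  · intro d x hx α; simp
  · intro n α
    refine Fin.lastCases ?_ (fun α => ?_) α
    · simpa using hρl n
    · simp

end
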